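/- Let 𝒳 ⊆ [0,∞)^n be connected with [0,ε)^n ⊆ 𝒳 for some ε > 0. Let F : [0,∞) × 𝒳 → ℝ^{n×n} take compartmental values, and let g : [0,∞) × 𝒳 → ℝⁿ satisfy g_i(t,x) ≥ x_i and g_i(t,x) = 0 whenever x_i = 0, for all t ≥ 0, x ∈ 𝒳 and i. Define f_{0i}(t,x) = −∑_{k=1}^n F_{ki}(t,x) and f_{ij}(t,x) = F_{ij}(t,x) for i ≠ j, and assume each of these functions is either identically zero on [0,∞) × 𝒳 or satisfies 0 < inf f_{ij} ≤ sup f_{ij} < +∞ over [0,∞) × 𝒳. Assume the system q̇(t) = F(t,q(t)) g(t,q(t)) has for every ξ ∈ 𝒳 a unique differentiable solution φ(·,ξ) : [0,∞) → 𝒳 with φ(0,ξ) = ξ. Then the null solution is asymptotically stable with respect to 𝒳 (i.e. there exists β ∈ 𝒦ℒ with |φ(t,ξ)|₁ ≤ β(|ξ|₁, t) for all t ≥ 0 and ξ ∈ 𝒳) if and only if F(0,0) is outflow connected; and if F(0,0) is outflow connected then the null solution is exponentially stable with respect to 𝒳, i.e. there exist λ > 0 and γ ≥ 1 with |φ(t,ξ)|₁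 ≤ γ e^{−λ t} |ξ|₁ for all t ≥ 0 and ξ ∈ 𝒳. -/

import Mathlib

open Finset

/-- An `n × n` real matrix is compartmental if it is Metzler (nonnegative
off-diagonal entries) and all of its column sums are nonpositive. -/
def IsCompartmental {n : ℕ} (F : Matrix (Fin n) (Fin n) ℝ) : Prop :=
  (∀ i j : Fin n, i ≠ j → 0 ≤ F i j) ∧ ∀ i : Fin n, (∑ k, F k i) ≤ 0

/-- Vertex `i` is an outflow vertex when the `i`-th column sum is negative. -/
def OutflowVertex {n : ℕ} (F : Matrix (Fin n) (Fin n) ℝ) (i : Fin n) : Prop :=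
  (∑ k, F k i) < 0

/-- `F` is outflow connected: the set of outflow vertices is nonempty and every
vertex that is not an outflow vertex has a (directed) path to some outflow
vertex, where there is an edge from `u` to `v` when `F v u > 0`. -/
def OutflowConnected {n : ℕ} (F : Matrix (Fin n) (Fin n) ℝ) : Prop :=
  (∃ i, OutflowVertex F i) ∧
  ∀ i, ¬ OutflowVertex F i → ∃ j, OutflowVertex F j ∧
    Relation.ReflTransGen (fun u v : Fin n => 0 < F v u) i j

/-- The class `𝒦ℒ` of comparison functions. -/
def IsKL (β : ℝ → ℝ → ℝ) : Prop :=
  ContinuousOn (fun p : ℝ × ℝ => β p.1 p.2) (Set.Ici 0 ×ˢ Set.Ici 0) ∧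
  (∀ r ∈ Set.Ici (0 : ℝ), ∀ t ∈ Set.Ici (0 : ℝ), 0 ≤ β r t) ∧
  (∀ t ∈ Set.Ici (0 : ℝ), β 0 t = 0) ∧
  (∀ t ∈ Set.Ici (0 : ℝ), StrictMonoOn (fun r => β r t) (Set.Ici 0)) ∧
  (∀ r ∈ Set.Ici (0 : ℝ), Filter.Tendsto (fun t => β r t) Filter.atTop (nhds 0))

/-- The `1`-norm `|x|₁ = ∑ i, |x i|` on `ℝⁿ`. -/
def onenorm {n : ℕ} (x : Fin n → ℝ) : ℝ := ∑ i, |x i|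

/-!
For a nonnegative weight vector `w`, the function `w ⬝ᵥ q` of a trajectory has derivative
`(w ᵥ* F) ⬝ᵥ g`, so both halves of the theorem amount to finding a suitable `w`.

If `F(0,0)` is outflow connected, give vertex `i` the weight `1 - r ^ (d i + 1)`, where `d i` is the
length of a shortest path from `i` to an outflow vertex. For small `r` the flow along the first edge
of such a path (or the outflow itself) lowers the weight by more than all the other flows out of the
vertex can raise it, so `w ᵥ* F ≤ -c • w` for some `c > 0`, and `w ⬝ᵥ q` decays like `exp (-c * t)`.

Otherwise let `w` be the indicator of the vertices without a path to an outflow vertex. Nothing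
leaves this set, so `0 ≤ w ᵥ* F`, and the mass in it never decreases.

Since each coefficient either vanishes identically or is bounded away from zero, the graph of
`F(t,x)` does not depend on `(t,x)`, and neither does `c`.
-/

open scoped Matrix

section Reachability

variable {α : Type*} {T : α → Prop} {E : α → α → Prop}

/-- `HitsIn T E k i` says that some `E`-walk with exactly `k` steps leads from `i` into `T`. It
serves to measure the distance from a vertex to the outflow vertices. -/
inductive HitsIn (T : α → Prop) (E : α → α → Prop) : ℕ → α → Prop
  | zero {i : α} : T i → HitsIn T E 0 i
  | succ {k : ℕ} {i j : α} : E i j → HitsIn T E k j → HitsIn T E (k + 1) i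

theorem exists_hitsIn {i j : α} (hj : T j) (hij : Relation.ReflTransGen E i j) :
    ∃ k, HitsIn T E k i := by
  induction hij using Relation.ReflTransGen.head_induction_on with
  | refl => exact ⟨0, .zero hj⟩
  | head hab _ ih => exact ih.imp' Nat.succ fun _ hk => .succ hab hk

theorem exists_rank_of_forall_reflTransGen (h : ∀ i, ∃ j, T j ∧ Relation.ReflTransGen E i j) :
    ∃ d : α → ℕ, ∀ i, T i ∨ ∃ j, E i j ∧ d j < d i := by
  classical
  have hits (i : α) : ∃ k, HitsIn T E k i :=
    let ⟨_, hj, hij⟩ := h i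
    exists_hitsIn hj hij
  refine ⟨fun i => Nat.find (hits i), fun i => ?_⟩
  change T i ∨ ∃ j, E i j ∧ Nat.find (hits j) < Nat.find (hits i)
  have hi := Nat.find_spec (hits i)
  generalize Nat.find (hits i) = k at hi ⊢
  cases hi with
  | zero hT => exact .inl hT
  | succ hE hj => exact .inr ⟨_, hE, Nat.lt_succ_of_le (Nat.find_min' _ hj)⟩

end Reachability

section WeightedColumn

variable {ι : Type*} [Fintype ι] {v w : ι → ℝ} {j : ι} {a b m M : ℝ}

theorem sum_sub_mul_le_card_mul (hb : 0 ≤ b) (hM : 0 ≤ M) (hw : ∀ i, w i - w j ≤ b)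
    (hv : ∀ i ≠ j, v i ∈ Set.Icc 0 M) (s : Finset ι) :
    ∑ i ∈ s, (w i - w j) * v i ≤ Fintype.card ι * (b * M) := by
  have term_le (i : ι) : (w i - w j) * v i ≤ b * M := by
    obtain rfl | hij := eq_or_ne i j
    · simpa only [sub_self, zero_mul] using mul_nonneg hb hM
    · exact mul_le_mul (hw i) (hv i hij).2 (hv i hij).1 hb
  calc ∑ i ∈ s, (w i - w j) * v i
      ≤ #s • (b * M) := sum_le_card_nsmul s _ _ fun i _ => term_le i
    _ = #s * (b * M) := nsmul_eq_mul _ _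
    _ ≤ Fintype.card ι * (b * M) := by gcongr; exact card_le_univ s

theorem sum_mul_eq_sum_sub_mul_add (v w : ι → ℝ) (j : ι) :
    ∑ i, w i * v i = ∑ i, (w i - w j) * v i + w j * ∑ i, v i := by
  simp only [sub_mul, sum_sub_distrib, mul_sum, sub_add_cancel]

theorem sum_mul_le_of_outflow (ha : 0 ≤ a) (hb : 0 ≤ b) (hm : 0 ≤ m) (hM : 0 ≤ M)
    (hw : ∀ i, w i - w j ≤ b) (hv : ∀ i ≠ j, v i ∈ Set.Icc 0 M)
    (haj : a ≤ w j) (hout : m ≤ -∑ i, v i) :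
    ∑ i, w i * v i ≤ Fintype.card ι * (b * M) - a * m := by
  have gain := sum_sub_mul_le_card_mul hb hM hw hv univ
  have loss : a * m ≤ w j * -∑ i, v i := mul_le_mul haj hout hm (ha.trans haj)
  rw [sum_mul_eq_sum_sub_mul_add v w j]
  linarith

theorem sum_mul_le_of_edge (ha : 0 ≤ a) (hb : 0 ≤ b) (hm : 0 ≤ m) (hM : 0 ≤ M)
    (hw : ∀ i, w i - w j ≤ b) (hv : ∀ i ≠ j, v i ∈ Set.Icc 0 M) (hwj : 0 ≤ w j)
    (hsum : ∑ i, v i ≤ 0) {i : ι} (hai : a ≤ w j - w i) (hmi : m ≤ v i) :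
    ∑ i, w i * v i ≤ Fintype.card ι * (b * M) - a * m := by
  classical
  have gain := sum_sub_mul_le_card_mul hb hM hw hv (univ.erase i)
  have loss : a * m ≤ (w j - w i) * v i := mul_le_mul hai hmi hm (ha.trans hai)
  have outflow : w j * ∑ i, v i ≤ 0 := mul_nonpos_of_nonneg_of_nonpos hwj hsum
  rw [sum_mul_eq_sum_sub_mul_add v w j, ← add_sum_erase univ _ (mem_univ i)]
  linarith

end WeightedColumn

section RankWeight

variable {ι : Type*} {d : ι → ℕ} {r : ℝ}

/-- The weight `1 - r ^ (d i + 1)` of a vertex `i` of rank `d i`. It increases with the rank, and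
for small `r` a step down in rank costs much more weight than any step up can gain. -/
def rankWeight (r : ℝ) (d : ι → ℕ) (i : ι) : ℝ :=
  1 - r ^ (d i + 1)

theorem rankWeight_mem_Icc (hr : 0 ≤ r) (hr' : r ≤ 1 / 2) (i : ι) :
    rankWeight r d i ∈ Set.Icc (1 / 2) 1 := by
  have hpow : r ^ (d i + 1) ≤ r := pow_le_of_le_one hr (by linarith) (Nat.succ_ne_zero _)
  constructor <;> unfold rankWeight <;> linarith [pow_nonneg hr (d i + 1)]

theorem rankWeight_sub_le (hr : 0 ≤ r) (i j : ι) :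
    rankWeight r d i - rankWeight r d j ≤ r ^ (d j) * r := by
  unfold rankWeight
  linarith [pow_nonneg hr (d i + 1), pow_succ r (d j)]

theorem le_rankWeight (hr : 0 ≤ r) (hr' : r ≤ 1) (j : ι) :
    r ^ (d j) * (1 - r) ≤ rankWeight r d j := by
  unfold rankWeight
  linarith [pow_le_one₀ hr hr' (n := d j), pow_succ r (d j)]

theorem le_rankWeight_sub_of_lt (hr : 0 ≤ r) (hr' : r ≤ 1) {i j : ι} (hij : d i < d j) :
    r ^ (d j) * (1 - r) ≤ rankWeight r d j - rankWeight r d i := by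
  unfold rankWeight
  linarith [pow_le_pow_of_le_one hr hr' (Order.add_one_le_of_lt hij), pow_succ r (d j)]

theorem sum_rankWeight_mul_le [Fintype ι] {m M : ℝ} (hm : 0 ≤ m) (hM : 0 ≤ M) (hr : 0 ≤ r)
    (hr' : r ≤ 1 / 2) (hrm : r * (Fintype.card ι * M + m) ≤ m / 2) {v : ι → ℝ} {j : ι}
    (hv : ∀ i ≠ j, v i ∈ Set.Icc 0 M) (hsum : ∑ i, v i ≤ 0)
    (hdrop : m ≤ -∑ i, v i ∨ ∃ i, d i < d j ∧ m ≤ v i) :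
    ∑ i, rankWeight r d i * v i ≤ -(r ^ (d j) * (m / 2)) := by
  have hr1 : r ≤ 1 := by linarith
  have hpow : 0 ≤ r ^ (d j) := pow_nonneg hr _
  have ha : 0 ≤ r ^ (d j) * (1 - r) := mul_nonneg hpow (sub_nonneg.2 hr1)
  have hb : 0 ≤ r ^ (d j) * r := mul_nonneg hpow hr
  have hw (i : ι) := rankWeight_sub_le (d := d) hr i j
  calc ∑ i, rankWeight r d i * v i
      ≤ Fintype.card ι * (r ^ (d j) * r * M) - r ^ (d j) * (1 - r) * m := by
        obtain hout | ⟨i, hij, hmi⟩ := hdrop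
        · exact sum_mul_le_of_outflow ha hb hm hM hw hv (le_rankWeight hr hr1 j) hout
        · exact sum_mul_le_of_edge ha hb hm hM hw hv (ha.trans (le_rankWeight hr hr1 j)) hsum
            (le_rankWeight_sub_of_lt hr hr1 hij) hmi
    _ = r ^ (d j) * (r * (Fintype.card ι * M + m) - m) := by ring
    _ ≤ r ^ (d j) * -(m / 2) := by gcongr; linarith
    _ = -(r ^ (d j) * (m / 2)) := mul_neg _ _

end RankWeight

section Compartmental

variable {n : ℕ} {A : Matrix (Fin n) (Fin n) ℝ}

theorem IsCompartmental.diag_nonpos (hA : IsCompartmental A) (i : Fin n) : A i i ≤ 0 := by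
  have hoff : 0 ≤ ∑ k ∈ univ.erase i, A k i :=
    sum_nonneg fun k hk => hA.1 k i (ne_of_mem_erase hk)
  linarith [hA.2 i, add_sum_erase univ (fun k => A k i) (mem_univ i)]

theorem IsCompartmental.ne_of_pos (hA : IsCompartmental A) {i j : Fin n} (hij : 0 < A i j) :
    i ≠ j := by
  rintro rfl
  exact hij.not_ge (hA.diag_nonpos i)

/-- `ReachesOutflow A i` says that `i` has a path, possibly of length zero, to an outflow vertex
of `A`. -/
def ReachesOutflow (A : Matrix (Fin n) (Fin n) ℝ) (i : Fin n) : Prop :=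
  ∃ j, OutflowVertex A j ∧ Relation.ReflTransGen (fun u v : Fin n => 0 < A v u) i j

theorem OutflowVertex.reachesOutflow {i : Fin n} (hi : OutflowVertex A i) : ReachesOutflow A i :=
  ⟨i, hi, .refl⟩

theorem ReachesOutflow.of_edge {i j : Fin n} (hij : 0 < A j i) :
    ReachesOutflow A j → ReachesOutflow A i :=
  fun ⟨k, hk, hjk⟩ => ⟨k, hk, .head hij hjk⟩

theorem outflowConnected_iff :
    OutflowConnected A ↔ Nonempty (Fin n) ∧ ∀ i, ReachesOutflow A i := by
  constructor
  · rintro ⟨⟨i, _⟩, hpath⟩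
    exact ⟨⟨i⟩, fun j => (em (OutflowVertex A j)).elim (·.reachesOutflow) (hpath j)⟩
  · rintro ⟨⟨i⟩, hreach⟩
    obtain ⟨j, hj, _⟩ := hreach i
    exact ⟨⟨j, hj⟩, fun i _ => hreach i⟩

/-- The indicator of the trap of `A`: the vertices without a path to an outflow vertex. -/
noncomputable def trapIndicator (A : Matrix (Fin n) (Fin n) ℝ) : Fin n → ℝ :=
  {i | ¬ReachesOutflow A i}.indicator 1

theorem trapIndicator_of_reachesOutflow {i : Fin n} (hi : ReachesOutflow A i) :
    trapIndicator A i = 0 :=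
  Set.indicator_of_notMem (not_not.2 hi) _

theorem trapIndicator_of_not_reachesOutflow {i : Fin n} (hi : ¬ReachesOutflow A i) :
    trapIndicator A i = 1 :=
  Set.indicator_of_mem (s := {i | ¬ReachesOutflow A i}) hi _

theorem trapIndicator_nonneg (A : Matrix (Fin n) (Fin n) ℝ) : 0 ≤ trapIndicator A :=
  Set.indicator_nonneg fun _ _ => zero_le_one

theorem trapIndicator_le_one (A : Matrix (Fin n) (Fin n) ℝ) : trapIndicator A ≤ 1 :=
  Set.indicator_le_self' fun _ _ => zero_le_one

theorem IsCompartmental.trapIndicator_vecMul_nonneg (hA : IsCompartmental A) :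
    0 ≤ trapIndicator A ᵥ* A := by
  intro j
  change 0 ≤ ∑ i, trapIndicator A i * A i j
  by_cases hj : ReachesOutflow A j
  · refine sum_nonneg fun i _ => ?_
    obtain rfl | hij := eq_or_ne i j
    · simp only [trapIndicator_of_reachesOutflow hj, zero_mul, le_refl]
    · exact mul_nonneg (trapIndicator_nonneg A i) (hA.1 i j hij)
  · have entry_le (i : Fin n) : A i j ≤ trapIndicator A i * A i j := by
      by_cases hi : ReachesOutflow A i
      · rw [trapIndicator_of_reachesOutflow hi, zero_mul]
        exact not_lt.1 fun hij => hj (hi.of_edge hij)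
      · rw [trapIndicator_of_not_reachesOutflow hi, one_mul]
    calc 0 ≤ ∑ i, A i j := not_lt.1 fun hout => hj (OutflowVertex.reachesOutflow hout)
      _ ≤ ∑ i, trapIndicator A i * A i j := sum_le_sum fun i _ => entry_le i

end Compartmental

/-- A family of compartmental matrices indexed by a set `s`, each of whose off-diagonal entries and
negated column sums either vanishes on `s` or is bounded below there by a positive constant, the
entries being bounded above as well. For the matrix function `F` of the theorem, the index is the
pair `(t, x)`. -/
structure IsCompartmentalFamily {α : Type*} {n : ℕ} (s : Set α)
    (A : α → Matrix (Fin n) (Fin n) ℝ) : Prop where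
  isCompartmental : ∀ p ∈ s, IsCompartmental (A p)
  entry : ∀ i j, i ≠ j →
    (∀ p ∈ s, A p i j = 0) ∨ ∃ m M : ℝ, 0 < m ∧ ∀ p ∈ s, m ≤ A p i j ∧ A p i j ≤ M
  outflow : ∀ j, (∀ p ∈ s, -∑ k, A p k j = 0) ∨ ∃ m : ℝ, 0 < m ∧ ∀ p ∈ s, m ≤ -∑ k, A p k j

namespace IsCompartmentalFamily

variable {α : Type*} {n : ℕ} {s : Set α} {A : α → Matrix (Fin n) (Fin n) ℝ} {p q : α}

theorem prod {β : Type*} {t : Set β} {A : α → β → Matrix (Fin n) (Fin n) ℝ}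
    (hA : ∀ x ∈ s, ∀ y ∈ t, IsCompartmental (A x y))
    (hentry : ∀ i j, i ≠ j → (∀ x ∈ s, ∀ y ∈ t, A x y i j = 0) ∨
      ∃ m M : ℝ, 0 < m ∧ ∀ x ∈ s, ∀ y ∈ t, m ≤ A x y i j ∧ A x y i j ≤ M)
    (houtflow : ∀ j, (∀ x ∈ s, ∀ y ∈ t, -∑ k, A x y k j = 0) ∨
      ∃ m : ℝ, 0 < m ∧ ∀ x ∈ s, ∀ y ∈ t, m ≤ -∑ k, A x y k j) :
    IsCompartmentalFamily (s ×ˢ t) fun p => A p.1 p.2 where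
  isCompartmental := Set.forall_prod_set.2 hA
  entry := by simpa only [Set.forall_prod_set] using hentry
  outflow := by simpa only [Set.forall_prod_set] using houtflow

theorem exists_forall_le_of_edge (hA : IsCompartmentalFamily s A) (hp : p ∈ s) {i j : Fin n}
    (hij : 0 < A p i j) : ∃ m > 0, ∀ q ∈ s, m ≤ A q i j := by
  obtain hzero | ⟨m, _, hm, hbound⟩ := hA.entry i j ((hA.isCompartmental p hp).ne_of_pos hij)
  · exact absurd (hzero p hp) hij.ne'
  · exact ⟨m, hm, fun q hq => (hbound q hq).1⟩

theorem exists_forall_le_of_outflowVertex (hA : IsCompartmentalFamily s A) (hp : p ∈ s)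
    {j : Fin n} (hj : OutflowVertex (A p) j) : ∃ m > 0, ∀ q ∈ s, m ≤ -∑ k, A q k j :=
  (hA.outflow j).resolve_left fun hzero => hj.ne (neg_eq_zero.1 (hzero p hp))

theorem edge_iff (hA : IsCompartmentalFamily s A) (hp : p ∈ s) (hq : q ∈ s) (i j : Fin n) :
    0 < A p i j ↔ 0 < A q i j := by
  have mp {p q : α} (hp : p ∈ s) (hq : q ∈ s) (hij : 0 < A p i j) : 0 < A q i j :=
    let ⟨_, hm, hle⟩ := hA.exists_forall_le_of_edge hp hij
    hm.trans_le (hle q hq)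
  exact ⟨mp hp hq, mp hq hp⟩

theorem outflowVertex_iff (hA : IsCompartmentalFamily s A) (hp : p ∈ s) (hq : q ∈ s)
    (j : Fin n) : OutflowVertex (A p) j ↔ OutflowVertex (A q) j := by
  have mp {p q : α} (hp : p ∈ s) (hq : q ∈ s) (hj : OutflowVertex (A p) j) :
      OutflowVertex (A q) j :=
    let ⟨_, hm, hle⟩ := hA.exists_forall_le_of_outflowVertex hp hj
    neg_pos.1 (hm.trans_le (hle q hq))
  exact ⟨mp hp hq, mp hq hp⟩

theorem trapIndicator_eq (hA : IsCompartmentalFamily s A) (hp : p ∈ s) (hq : q ∈ s) :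
    trapIndicator (A p) = trapIndicator (A q) := by
  simp only [trapIndicator, ReachesOutflow, hA.outflowVertex_iff hp hq, hA.edge_iff hp hq]

theorem exists_forall_entry_le (hA : IsCompartmentalFamily s A) :
    ∃ M, 0 ≤ M ∧ ∀ p ∈ s, ∀ i j, i ≠ j → A p i j ≤ M := by
  have entry_le (e : Fin n × Fin n) : ∃ M, e.1 ≠ e.2 → ∀ p ∈ s, A p e.1 e.2 ≤ M := by
    by_cases he : e.1 = e.2
    · exact ⟨0, fun hne => absurd he hne⟩
    · obtain hzero | ⟨_, M, _, hbound⟩ := hA.entry e.1 e.2 he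
      · exact ⟨0, fun _ p hp => (hzero p hp).le⟩
      · exact ⟨M, fun _ p hp => (hbound p hp).2⟩
  choose M hM using entry_le
  obtain ⟨B, hB⟩ := Finite.exists_le M
  exact ⟨max B 0, le_max_right _ _, fun p hp i j hij =>
    (hM (i, j) hij p hp).trans ((hB _).trans (le_max_left _ _))⟩

theorem exists_rank (hA : IsCompartmentalFamily s A) (hp : p ∈ s)
    (hconn : OutflowConnected (A p)) :
    ∃ d : Fin n → ℕ, ∃ m > 0, ∀ q ∈ s, ∀ j,
      m ≤ -∑ k, A q k j ∨ ∃ i, d i < d j ∧ m ≤ A q i j := by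
  obtain ⟨_, hreach⟩ := outflowConnected_iff.1 hconn
  obtain ⟨d, hd⟩ := exists_rank_of_forall_reflTransGen hreach
  have drop (j : Fin n) : ∃ m > 0, ∀ q ∈ s,
      m ≤ -∑ k, A q k j ∨ ∃ i, d i < d j ∧ m ≤ A q i j := by
    obtain hout | ⟨i, hedge, hlt⟩ := hd j
    · obtain ⟨m, hm, hle⟩ := hA.exists_forall_le_of_outflowVertex hp hout
      exact ⟨m, hm, fun q hq => .inl (hle q hq)⟩
    · obtain ⟨m, hm, hle⟩ := hA.exists_forall_le_of_edge hp hedge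
      exact ⟨m, hm, fun q hq => .inr ⟨i, hlt, hle q hq⟩⟩
  choose m hm hdrop using drop
  obtain ⟨j₀, hj₀⟩ := Finite.exists_min m
  exact ⟨d, m j₀, hm j₀, fun q hq j => (hdrop j q hq).imp (hj₀ j).trans
    fun ⟨i, hlt, hle⟩ => ⟨i, hlt, (hj₀ j).trans hle⟩⟩

theorem exists_weight_vecMul_le (hA : IsCompartmentalFamily s A) (hp : p ∈ s)
    (hconn : OutflowConnected (A p)) :
    ∃ w : Fin n → ℝ, (∀ i, w i ∈ Set.Icc (1 / 2) 1) ∧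
      ∃ c : ℝ, 0 < c ∧ ∀ q ∈ s, w ᵥ* A q ≤ -c • w := by
  obtain ⟨M, hM, hentry⟩ := hA.exists_forall_entry_le
  obtain ⟨d, m, hm, hdrop⟩ := hA.exists_rank hp hconn
  obtain ⟨D, hD⟩ := Finite.exists_le d
  set r : ℝ := m / (2 * (n * M + m)) with hr_def
  have hr : 0 < r := by positivity
  have hrm : r * (n * M + m) = m / 2 := by rw [hr_def]; field_simp
  have hr' : r ≤ 1 / 2 := by
    rw [hr_def, div_le_div_iff₀ (by positivity) two_pos]
    linarith [mul_nonneg n.cast_nonneg hM]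
  have hw (i : Fin n) := rankWeight_mem_Icc (d := d) hr.le hr' i
  refine ⟨rankWeight r d, hw, r ^ D * (m / 2), by positivity, fun q hq j => ?_⟩
  have hAq := hA.isCompartmental q hq
  calc ∑ i, rankWeight r d i * A q i j
      ≤ -(r ^ d j * (m / 2)) :=
        sum_rankWeight_mul_le hm.le hM hr.le hr' (by rw [Fintype.card_fin, hrm])
          (fun i hij => ⟨hAq.1 i j hij, hentry q hq i j hij⟩) (hAq.2 j) (hdrop q hq j)
    _ ≤ -(r ^ D * (m / 2)) := by
        have hpow := pow_le_pow_of_le_one hr.le (by linarith) (hD j)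
        exact neg_le_neg (mul_le_mul_of_nonneg_right hpow (by positivity))
    _ ≤ -(r ^ D * (m / 2)) * rankWeight r d j := by
        rw [neg_mul, neg_le_neg_iff]
        exact mul_le_of_le_one_right (by positivity) (hw j).2

end IsCompartmentalFamily

theorem le_mul_exp_of_hasDerivWithinAt_le {V V' : ℝ → ℝ} {c : ℝ}
    (hV : ∀ t ≥ 0, HasDerivWithinAt V (V' t) (Set.Ici 0) t) (hle : ∀ t ≥ 0, V' t ≤ c * V t)
    {t : ℝ} (ht : 0 ≤ t) : V t ≤ V 0 * Real.exp (c * t) := by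
  have := le_gronwallBound_of_liminf_deriv_right_le (f := V) (f' := V') (δ := V 0) (K := c)
    (ε := 0) (a := 0) (b := t)
    (fun s hs => (hV s hs.1).continuousWithinAt.mono Set.Icc_subset_Ici_self)
    (fun s hs _ hr => ((hV s hs.1).mono (Set.Ici_subset_Ici.2 hs.1)).liminf_right_slope_le hr)
    le_rfl (fun s hs => (hle s hs.1).trans_eq (add_zero _).symm) t ⟨ht, le_rfl⟩
  rwa [gronwallBound_ε0, sub_zero] at this

theorem hasDerivWithinAt_const_dotProduct {ι : Type*} [Fintype ι] (w : ι → ℝ) {q : ℝ → ι → ℝ}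
    {q' : ι → ℝ} {s : Set ℝ} {t : ℝ} (hq : HasDerivWithinAt q q' s t) :
    HasDerivWithinAt (fun t => w ⬝ᵥ q t) (w ⬝ᵥ q') s t :=
  .fun_sum fun i _ => (hasDerivWithinAt_pi.1 hq i).const_mul (w i)

section LinearFunctionals

variable {n : ℕ} {w x : Fin n → ℝ}

theorem onenorm_nonneg (x : Fin n → ℝ) : 0 ≤ onenorm x :=
  sum_nonneg fun _ _ => abs_nonneg _

theorem onenorm_of_nonneg (hx : 0 ≤ x) : onenorm x = 1 ⬝ᵥ x := by
  rw [one_dotProduct]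
  exact sum_congr rfl fun i _ => abs_of_nonneg (hx i)

theorem dotProduct_le_onenorm (hw : w ≤ 1) (hx : 0 ≤ x) : w ⬝ᵥ x ≤ onenorm x :=
  (dotProduct_le_dotProduct_of_nonneg_right hw hx).trans_eq (onenorm_of_nonneg hx).symm

variable {A : ℝ → Matrix (Fin n) (Fin n) ℝ} {q u : ℝ → Fin n → ℝ} {t : ℝ}

theorem hasDerivWithinAt_dotProduct_of_mulVec
    (hq : HasDerivWithinAt q (A t *ᵥ u t) (Set.Ici 0) t) :
    HasDerivWithinAt (fun t => w ⬝ᵥ q t) ((w ᵥ* A t) ⬝ᵥ u t) (Set.Ici 0) t := by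
  rw [← Matrix.dotProduct_mulVec]
  exact hasDerivWithinAt_const_dotProduct w hq

theorem onenorm_le_mul_exp_of_vecMul_le (hw0 : 0 ≤ w) (hw1 : w ≤ 1) {γ : ℝ} (hγ : 0 ≤ γ)
    (hγw : 1 ≤ γ • w) {c : ℝ} (hc : 0 ≤ c) (hA : ∀ t ≥ 0, w ᵥ* A t ≤ -c • w)
    (hq0 : ∀ t ≥ 0, 0 ≤ q t) (hu : ∀ t ≥ 0, q t ≤ u t)
    (hq : ∀ t ≥ 0, HasDerivWithinAt q (A t *ᵥ u t) (Set.Ici 0) t) (ht : 0 ≤ t) :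
    onenorm (q t) ≤ γ * Real.exp (-c * t) * onenorm (q 0) := by
  have drift (s : ℝ) (hs : s ≥ 0) : (w ᵥ* A s) ⬝ᵥ u s ≤ -c * (w ⬝ᵥ q s) :=
    calc (w ᵥ* A s) ⬝ᵥ u s
        ≤ (-c • w) ⬝ᵥ u s :=
          dotProduct_le_dotProduct_of_nonneg_right (hA s hs) ((hq0 s hs).trans (hu s hs))
      _ = -c * (w ⬝ᵥ u s) := smul_dotProduct _ _ _
      _ ≤ -c * (w ⬝ᵥ q s) := mul_le_mul_of_nonpos_left
          (dotProduct_le_dotProduct_of_nonneg_left (hu s hs) hw0) (neg_nonpos.2 hc)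
  calc onenorm (q t)
      = 1 ⬝ᵥ q t := onenorm_of_nonneg (hq0 t ht)
    _ ≤ (γ • w) ⬝ᵥ q t := dotProduct_le_dotProduct_of_nonneg_right hγw (hq0 t ht)
    _ = γ * (w ⬝ᵥ q t) := smul_dotProduct _ _ _
    _ ≤ γ * (w ⬝ᵥ q 0 * Real.exp (-c * t)) := by
        gcongr
        exact le_mul_exp_of_hasDerivWithinAt_le
          (fun s hs => hasDerivWithinAt_dotProduct_of_mulVec (hq s hs)) drift ht
    _ ≤ γ * (onenorm (q 0) * Real.exp (-c * t)) := by
        gcongr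
        exact dotProduct_le_onenorm hw1 (hq0 0 le_rfl)
    _ = γ * Real.exp (-c * t) * onenorm (q 0) := by ring

theorem dotProduct_le_dotProduct_of_vecMul_nonneg (hA : ∀ t ≥ 0, 0 ≤ w ᵥ* A t)
    (hu : ∀ t ≥ 0, 0 ≤ u t) (hq : ∀ t ≥ 0, HasDerivWithinAt q (A t *ᵥ u t) (Set.Ici 0) t)
    (ht : 0 ≤ t) : w ⬝ᵥ q 0 ≤ w ⬝ᵥ q t := by
  have deriv (s : ℝ) (hs : s ≥ 0) := hasDerivWithinAt_dotProduct_of_mulVec (w := w) (hq s hs)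
  have mono : MonotoneOn (fun s => w ⬝ᵥ q s) (Set.Ici 0) :=
    monotoneOn_of_hasDerivWithinAt_nonneg (convex_Ici 0)
      (fun s hs => (deriv s hs).continuousWithinAt)
      (fun s hs => (deriv s (interior_subset hs)).mono interior_subset)
      (fun s hs => dotProduct_nonneg_of_nonneg (hA s (interior_subset hs))
        (hu s (interior_subset hs)))
  exact mono Set.self_mem_Ici ht ht

end LinearFunctionals

theorem isKL_mul_exp {γ lam : ℝ} (hγ : 0 < γ) (hlam : 0 < lam) :
    IsKL fun r t => γ * Real.exp (-lam * t) * r := by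
  refine ⟨Continuous.continuousOn (by fun_prop), fun r (hr : 0 ≤ r) t _ => by positivity,
    fun t _ => mul_zero _, fun t _ a _ b _ hab => mul_lt_mul_of_pos_left hab (by positivity),
    fun r _ => ?_⟩
  have decay : Filter.Tendsto (fun t => Real.exp (-lam * t)) Filter.atTop (nhds 0) :=
    Real.tendsto_exp_atBot.comp
      (Filter.tendsto_id.const_mul_atTop_of_neg (neg_lt_zero.2 hlam))
  simpa only [mul_zero, zero_mul] using (decay.const_mul γ).mul_const r

theorem IsKL.nonpos_of_forall_le {β : ℝ → ℝ → ℝ} (hβ : IsKL β) {r c : ℝ} (hr : 0 ≤ r)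
    (hc : ∀ t ≥ 0, c ≤ β r t) : c ≤ 0 :=
  ge_of_tendsto (hβ.2.2.2.2 r hr) (Filter.eventually_atTop.2 ⟨0, hc⟩)

section Stability

variable {n : ℕ} {X : Set (Fin n → ℝ)} {F : ℝ → (Fin n → ℝ) → Matrix (Fin n) (Fin n) ℝ}
  {g : ℝ → (Fin n → ℝ) → Fin n → ℝ}

/-- `IsTrajectory X F g q` says that `q` solves `q̇ = F(t,q) g(t,q)` on `[0,∞)` and stays in `X`,
the derivative at `0` being one-sided. -/
def IsTrajectory (X : Set (Fin n → ℝ)) (F : ℝ → (Fin n → ℝ) → Matrix (Fin n) (Fin n) ℝ)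
    (g : ℝ → (Fin n → ℝ) → Fin n → ℝ) (q : ℝ → Fin n → ℝ) : Prop :=
  ∀ t ≥ 0, q t ∈ X ∧ HasDerivWithinAt q (F t (q t) *ᵥ g t (q t)) (Set.Ici 0) t

theorem exists_onenorm_le_mul_exp (hX : ∀ x ∈ X, 0 ≤ x) (h0 : 0 ∈ X)
    (hF : IsCompartmentalFamily (Set.Ici 0 ×ˢ X) fun p => F p.1 p.2)
    (hg : ∀ t ≥ 0, ∀ x ∈ X, x ≤ g t x) (hconn : OutflowConnected (F 0 0)) :
    ∃ lam : ℝ, 0 < lam ∧ ∀ q, IsTrajectory X F g q → ∀ t ≥ 0,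
      onenorm (q t) ≤ 2 * Real.exp (-lam * t) * onenorm (q 0) := by
  obtain ⟨w, hw, c, hc, hwF⟩ :=
    hF.exists_weight_vecMul_le (p := (0, 0)) ⟨Set.self_mem_Ici, h0⟩ hconn
  have hw2 : 1 ≤ (2 : ℝ) • w := fun i => (div_le_iff₀' two_pos).1 (hw i).1
  exact ⟨c, hc, fun q hq t ht => onenorm_le_mul_exp_of_vecMul_le
    (fun i => one_half_pos.le.trans (hw i).1) (fun i => (hw i).2) zero_le_two hw2 hc.le
    (fun s hs => hwF (s, q s) ⟨hs, (hq s hs).1⟩) (fun s hs => hX _ (hq s hs).1)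
    (fun s hs => hg s hs _ (hq s hs).1) (fun s hs => (hq s hs).2) ht⟩

theorem exists_pos_le_onenorm (hn : 0 < n) (hX : ∀ x ∈ X, 0 ≤ x) (h0 : 0 ∈ X)
    (hF : IsCompartmentalFamily (Set.Ici 0 ×ˢ X) fun p => F p.1 p.2)
    (hg : ∀ t ≥ 0, ∀ x ∈ X, x ≤ g t x) (hconn : ¬OutflowConnected (F 0 0))
    {q : ℝ → Fin n → ℝ} (hq : IsTrajectory X F g q) (hpos : ∀ i, 0 < q 0 i) :
    ∃ c > 0, ∀ t ≥ 0, c ≤ onenorm (q t) := by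
  obtain ⟨i, hi⟩ : ∃ i, ¬ReachesOutflow (F 0 0) i := by
    by_contra! hreach
    exact hconn (outflowConnected_iff.2 ⟨Fin.pos_iff_nonempty.1 hn, hreach⟩)
  have hwF (s : ℝ) (hs : s ≥ 0) : 0 ≤ trapIndicator (F 0 0) ᵥ* F s (q s) := by
    have hmem : (s, q s) ∈ Set.Ici 0 ×ˢ X := ⟨hs, (hq s hs).1⟩
    rw [hF.trapIndicator_eq (p := (0, 0)) ⟨Set.self_mem_Ici, h0⟩ hmem]
    exact (hF.isCompartmental _ hmem).trapIndicator_vecMul_nonneg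
  refine ⟨q 0 i, hpos i, fun t ht => ?_⟩
  calc q 0 i
      = trapIndicator (F 0 0) i * q 0 i := by
        rw [trapIndicator_of_not_reachesOutflow hi, one_mul]
    _ ≤ trapIndicator (F 0 0) ⬝ᵥ q 0 :=
        single_le_sum (f := fun k => trapIndicator (F 0 0) k * q 0 k)
          (fun k _ => mul_nonneg (trapIndicator_nonneg _ k) (hpos k).le) (mem_univ i)
    _ ≤ trapIndicator (F 0 0) ⬝ᵥ q t := dotProduct_le_dotProduct_of_vecMul_nonneg hwF
        (fun s hs => (hX _ (hq s hs).1).trans (hg s hs _ (hq s hs).1)) (fun s hs => (hq s hs).2) ht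
    _ ≤ onenorm (q t) := dotProduct_le_onenorm (trapIndicator_le_one _) (hX _ (hq t ht).1)

end Stability

theorem stmt19_general {n : ℕ} (hn : 0 < n) {X : Set (Fin n → ℝ)} (hX : ∀ x ∈ X, 0 ≤ x)
    (h0 : 0 ∈ X) (hpos : ∃ ξ ∈ X, ∀ i, 0 < ξ i)
    {F : ℝ → (Fin n → ℝ) → Matrix (Fin n) (Fin n) ℝ}
    (hF : IsCompartmentalFamily (Set.Ici 0 ×ˢ X) fun p => F p.1 p.2)
    {g : ℝ → (Fin n → ℝ) → Fin n → ℝ} (hg : ∀ t ≥ 0, ∀ x ∈ X, x ≤ g t x)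
    {φ : ℝ → (Fin n → ℝ) → Fin n → ℝ}
    (hφ : ∀ ξ ∈ X, φ 0 ξ = ξ ∧ IsTrajectory X F g fun t => φ t ξ) :
    ((∃ β : ℝ → ℝ → ℝ, IsKL β ∧ ∀ ξ ∈ X, ∀ t ≥ (0 : ℝ), onenorm (φ t ξ) ≤ β (onenorm ξ) t) ↔
      OutflowConnected (F 0 0)) ∧
    (OutflowConnected (F 0 0) →
      ∃ lam : ℝ, 0 < lam ∧ ∃ γ : ℝ, 1 ≤ γ ∧ ∀ ξ ∈ X, ∀ t ≥ (0 : ℝ),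
        onenorm (φ t ξ) ≤ γ * Real.exp (-lam * t) * onenorm ξ) := by
  have exponential (hconn : OutflowConnected (F 0 0)) :
      ∃ lam : ℝ, 0 < lam ∧ ∃ γ : ℝ, 1 ≤ γ ∧ ∀ ξ ∈ X, ∀ t ≥ (0 : ℝ),
        onenorm (φ t ξ) ≤ γ * Real.exp (-lam * t) * onenorm ξ := by
    obtain ⟨lam, hlam, hle⟩ := exists_onenorm_le_mul_exp hX h0 hF hg hconn
    refine ⟨lam, hlam, 2, one_le_two, fun ξ hξ t ht => ?_⟩
    simpa only [(hφ ξ hξ).1] using hle _ (hφ ξ hξ).2 t ht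
  refine ⟨⟨?_, fun hconn => ?_⟩, exponential⟩
  · rintro ⟨β, hβ, hle⟩
    by_contra hconn
    obtain ⟨ξ, hξ, hξpos⟩ := hpos
    obtain ⟨hφ0, htraj⟩ := hφ ξ hξ
    obtain ⟨c, hc, hlow⟩ := exists_pos_le_onenorm hn hX h0 hF hg hconn htraj
      fun i => (hξpos i).trans_eq (congrFun hφ0.symm i)
    exact hc.not_ge (hβ.nonpos_of_forall_le (onenorm_nonneg ξ)
      fun t ht => (hlow t ht).trans (hle ξ hξ t ht))
  · obtain ⟨lam, hlam, γ, hγ, hle⟩ := exponential hconn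
    exact ⟨_, isKL_mul_exp (zero_lt_one.trans_le hγ) hlam, hle⟩

/-- for the compartmental system `q̇ = F(t,q) g(t,q)` on a
connected `𝒳 ⊆ [0,∞)^n` containing `[0,ε)^n`, with each coefficient
`f_{0i}(t,x) = -∑_k F_{ki}(t,x)` and `f_{ij}(t,x) = F_{ij}(t,x)` (`i ≠ j`)
either identically zero or with positive infimum and finite supremum, the null
solution is asymptotically stable with respect to `𝒳` if and only if `F(0,0)`
is outflow connected; and in that case it is exponentially stable. -/
theorem stmt19 (n : ℕ) (hn : 0 < n) (X : Set (Fin n → ℝ))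
    (hXsub : X ⊆ {x : Fin n → ℝ | ∀ i, 0 ≤ x i})
    (hXconn : IsConnected X)
    (ε : ℝ) (hε : 0 < ε) (hXeps : {x : Fin n → ℝ | ∀ i, x i ∈ Set.Ico 0 ε} ⊆ X)
    (F : ℝ → (Fin n → ℝ) → Matrix (Fin n) (Fin n) ℝ)
    (hFcomp : ∀ t ≥ (0 : ℝ), ∀ x ∈ X, IsCompartmental (F t x))
    (g : ℝ → (Fin n → ℝ) → (Fin n → ℝ))
    (hg : ∀ t ≥ (0 : ℝ), ∀ x ∈ X, ∀ i, x i ≤ g t x i ∧ (x i = 0 → g t x i = 0))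
    -- each off-diagonal coefficient is identically zero or bounded away from
    -- zero and infinity
    (hdich : ∀ i j : Fin n, i ≠ j →
      (∀ t ≥ (0 : ℝ), ∀ x ∈ X, F t x i j = 0) ∨
      (∃ m M : ℝ, 0 < m ∧ ∀ t ≥ (0 : ℝ), ∀ x ∈ X,
        m ≤ F t x i j ∧ F t x i j ≤ M))
    -- each outflow coefficient (negative of the column sum) is identically
    -- zero or bounded away from zero and infinity
    (hdich0 : ∀ i : Fin n,
      (∀ t ≥ (0 : ℝ), ∀ x ∈ X, -(∑ k, F t x k i) = 0) ∨
      (∃ m M : ℝ, 0 < m ∧ ∀ t ≥ (0 : ℝ), ∀ x ∈ X,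
        m ≤ -(∑ k, F t x k i) ∧ -(∑ k, F t x k i) ≤ M))
    -- the (unique) flow
    (φ : ℝ → (Fin n → ℝ) → (Fin n → ℝ))
    (hφ : ∀ ξ ∈ X, φ 0 ξ = ξ ∧ ∀ t ≥ (0 : ℝ), φ t ξ ∈ X ∧
      HasDerivAt (fun s => φ s ξ) ((F t (φ t ξ)).mulVec (g t (φ t ξ))) t)
    (huniq : ∀ ξ ∈ X, ∀ q : ℝ → Fin n → ℝ,
      (q 0 = ξ ∧ ∀ t ≥ (0 : ℝ), q t ∈ X ∧
        HasDerivAt q ((F t (q t)).mulVec (g t (q t))) t) →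
      ∀ t ≥ (0 : ℝ), q t = φ t ξ) :
    ((∃ β : ℝ → ℝ → ℝ, IsKL β ∧ ∀ ξ ∈ X, ∀ t ≥ (0 : ℝ),
        onenorm (φ t ξ) ≤ β (onenorm ξ) t) ↔
      OutflowConnected (F 0 0)) ∧
    (OutflowConnected (F 0 0) →
      ∃ lam : ℝ, 0 < lam ∧ ∃ γ : ℝ, 1 ≤ γ ∧ ∀ ξ ∈ X, ∀ t ≥ (0 : ℝ),
        onenorm (φ t ξ) ≤ γ * Real.exp (-lam * t) * onenorm ξ) := by
  have hF : IsCompartmentalFamily (Set.Ici 0 ×ˢ X) fun p => F p.1 p.2 :=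
    .prod hFcomp hdich fun j => (hdich0 j).imp_right fun ⟨m, _, hm, hbound⟩ =>
      ⟨m, hm, fun t ht x hx => (hbound t ht x hx).1⟩
  exact stmt19_general hn hXsub (hXeps fun _ => ⟨le_rfl, hε⟩)
    ⟨fun _ => ε / 2, hXeps fun _ => ⟨(half_pos hε).le, half_lt_self hε⟩, fun _ => half_pos hε⟩
    hF (fun t ht x hx i => (hg t ht x hx i).1)
    fun ξ hξ => (hφ ξ hξ).imp_right fun h t ht => (h t ht).imp_right (·.hasDerivWithinAt)
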